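/- arXiv:math/0312232 — 4 statements merged into one kernel-verified Lean document; each statement's English description precedes it below -/
import Mathlib

section
/- Let G be a finite group acting transitively on a nonempty finite set X such that the algebra of G-equivariant linear endomorphisms of ℂ^X is commutative. For a function ξ : X × X → ℂ satisfying ξ(g·x, g·y) = ξ(x, y) for all g ∈ G and x, y ∈ X, the following are equivalent: (a) there exists an irreducible complex character χ of G with P_χ ≠ 0 and ξ = ξ_{X,χ}; (b) ξ(x₀, x₀) = 1 for every x₀ ∈ X, and for all x₀, x₁, x₂ ∈ X one has (1/|G_{x₀}|) · Σ_{g ∈ G_{x₀}} ξ(g·x₁, x₂) = ξ(x₁, x₀) · ξ(x₀, x₂). -/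
open Finset

lemma aux_rank_one {G V : Type*} [Group G] [AddCommGroup V] [Module ℂ V] [FiniteDimensional ℂ V]
    (ρ : G →* V →ₗ[ℂ] V) (e : V →ₗ[ℂ] V)
    (hirr : ∀ v : V, v ≠ 0 → Submodule.span ℂ (Set.range fun g => ρ g v) = ⊤)
    (hee : ∀ u, e (e u) = e u) (he : e ≠ 0)
    (hc : ∀ a b u, e (ρ a (e (ρ b (e u)))) = e (ρ b (e (ρ a (e u))))) :
    ∃ (v : V) (φ : V →ₗ[ℂ] ℂ), φ v = 1 ∧ ∀ u, e u = φ u • v := by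
  obtain ⟨u0, hu0⟩ : ∃ u, e u ≠ 0 := by
    by_contra! h
    exact he (LinearMap.ext h)
  have hnt : Nontrivial (LinearMap.range e) :=
    ⟨⟨⟨e u0, u0, rfl⟩, 0, fun h => hu0 (congrArg Subtype.val h)⟩⟩
  have hsc : ∀ a, ∃ c : ℂ, ∀ w, e (ρ a (e w)) = c • e w := by
    intro a
    let A : Module.End ℂ (LinearMap.range e) :=
      ((e ∘ₗ ρ a).codRestrict (LinearMap.range e) (fun u => ⟨_, rfl⟩)) ∘ₗ (LinearMap.range e).subtype
    obtain ⟨c, hcA⟩ := Module.End.exists_eigenvalue A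
    obtain ⟨⟨v, v', hv'⟩, hv⟩ := hcA.exists_hasEigenvector
    have hv0 : v ≠ 0 := fun h => hv.2 (Subtype.ext h)
    have hAv : e (ρ a v) = c • v := congrArg Subtype.val hv.apply_eq_smul
    refine ⟨c, fun w => ?_⟩
    have hev : e v = v := by rw [← hv', hee]
    have hw : w ∈ Submodule.span ℂ (Set.range fun g => ρ g v) := by rw [hirr v hv0]; trivial
    induction hw using Submodule.span_induction with
    | mem x h =>
      obtain ⟨g, rfl⟩ := h
      have := hc a g v
      rw [hev, hAv] at this
      simpa using this
    | zero => simp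
    | add x y _ _ hx hy => simp [hx, hy]
    | smul r x _ hx => rw [map_smul, map_smul, map_smul, hx, smul_comm]
  choose c hcc using hsc
  obtain ⟨f, hf⟩ := Module.Projective.exists_dual_eq_one ℂ hu0
  have hr : ∀ w, ∃ r : ℂ, e w = r • e u0 := by
    intro w
    have hw : w ∈ Submodule.span ℂ (Set.range fun g => ρ g (e u0)) := by
      rw [hirr _ hu0]; trivial
    induction hw using Submodule.span_induction with
    | mem x h =>
      obtain ⟨g, rfl⟩ := h
      exact ⟨_, hcc g u0⟩
    | zero => exact ⟨0, by simp⟩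
    | add x y _ _ hx hy =>
      obtain ⟨r, hr⟩ := hx
      obtain ⟨s, hs⟩ := hy
      exact ⟨r + s, by rw [map_add, hr, hs, add_smul]⟩
    | smul r x _ hx =>
      obtain ⟨s, hs⟩ := hx
      exact ⟨r * s, by rw [map_smul, hs, mul_smul]⟩
  refine ⟨e u0, f ∘ₗ e, by simp [hee, hf], fun u => ?_⟩
  obtain ⟨r, hr⟩ := hr u
  simp [hr, hf]

lemma simple_span {G : Type} [Group G] (V : FDRep ℂ G) [CategoryTheory.Simple V] (v : V) (hv : v ≠ 0) :
    Submodule.span ℂ (Set.range fun g => V.ρ g v) = ⊤ := by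
  let U := Submodule.span ℂ (Set.range fun g => V.ρ g v)
  have hU : ∀ g, ∀ u ∈ U, V.ρ g u ∈ U := by
    intro g u hu
    induction hu using Submodule.span_induction with
    | mem x h =>
      obtain ⟨h, rfl⟩ := h
      refine Submodule.subset_span ⟨g * h, ?_⟩
      simp
    | zero => simp
    | add x y _ _ hx hy => simpa using U.add_mem hx hy
    | smul r x _ hx => simpa using U.smul_mem r hx
  let σ : Representation ℂ G U :=
    { toFun := fun g => (V.ρ g).restrict (hU g)
      map_one' := by ext; simp
      map_mul' := fun x y => by ext; simp }
  let f : FDRep.of σ ⟶ V := ⟨FGModuleCat.ofHom U.subtype, fun g => by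
    ext x; rfl⟩
  have hmono : CategoryTheory.Mono f := by
    refine ⟨fun {Z} a b hab => ?_⟩
    ext x
    refine congrArg (Subtype.val) (?_ : a.hom.hom.hom x = b.hom.hom.hom x)
    have := congrArg (fun t : Z ⟶ V => t.hom.hom.hom x) hab
    exact Subtype.ext this
  have hvU : v ∈ U := Submodule.subset_span ⟨1, by simp⟩
  have hne : f ≠ 0 := by
    intro h
    have := congrArg (fun t : FDRep.of σ ⟶ V => t.hom.hom.hom (⟨v, hvU⟩ : U)) h
    exact hv this
  have : CategoryTheory.IsIso f := CategoryTheory.isIso_of_mono_of_nonzero hne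
  rw [eq_top_iff]
  intro w _
  have := congrArg (fun t : V ⟶ V => t.hom.hom.hom w) (CategoryTheory.IsIso.inv_hom_id f)
  have h2 : (((CategoryTheory.inv f).hom.hom.hom w : U) : V) = w := this
  rw [← h2]
  exact Subtype.property _

lemma irr_simple {G V : Type} [Group G] [Fintype G] [AddCommGroup V] [Module ℂ V] [FiniteDimensional ℂ V]
    (ρ : Representation ℂ G V) [ρ.IsIrreducible] : CategoryTheory.Simple (FDRep.of ρ) := by
  rw [FDRep.simple_iff_char_is_norm_one]
  have hN : (Nat.card G : ℂ) ≠ 0 := by simp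
  have : Invertible (Nat.card G : ℂ) := invertibleOfNonzero hN
  have := ρ.char_orthonormal ρ
  rw [if_pos ⟨Representation.Equiv.refl ρ⟩] at this
  field_simp at this
  exact this

section
set_option linter.unusedSectionVars false
variable {G X : Type} [Group G] [Fintype G] [Fintype X] [Nonempty X] [MulAction G X] [DecidableEq X]

/-- the stabilizer as a finset -/
def stabF (G : Type) {X : Type} [Group G] [Fintype G] [MulAction G X] [DecidableEq X] (x₀ : X) :
    Finset G := Finset.univ.filter (fun g : G => g • x₀ = x₀)

lemma mem_stabF {x₀ : X} {g : G} : g ∈ stabF G x₀ ↔ g • x₀ = x₀ := by simp [stabF]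

lemma stabF_card_ne (x₀ : X) : ((stabF G x₀).card : ℂ) ≠ 0 := by
  have : (1 : G) ∈ stabF G x₀ := by simp [mem_stabF]
  exact_mod_cast Finset.card_ne_zero_of_mem this

/-- reindexing of a fibre sum -/
lemma fibre_sum {M : Type*} [AddCommMonoid M] (x₀ : X) (a b : G) (F : G → M) :
    ∑ g ∈ Finset.univ.filter (fun g : G => g • (b • x₀) = a • x₀), F g =
      ∑ k ∈ stabF G x₀, F (a * k * b⁻¹) := by
  symm
  refine Finset.sum_bij' (fun k _ => a * k * b⁻¹) (fun g _ => a⁻¹ * g * b) ?_ ?_ ?_ ?_ ?_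
  · intro k hk
    rw [mem_stabF] at hk
    simp [mul_smul, hk]
  · intro g hg
    simp only [mem_filter, mem_univ, true_and] at hg
    simp [mem_stabF, mul_smul, hg]
  · intros; group
  · intros; group
  · intros; rfl

lemma card_ratio (htrans : MulAction.IsPretransitive G X) (x₀ : X) :
    (Fintype.card X : ℂ) / (Fintype.card G : ℂ) = ((stabF G x₀).card : ℂ)⁻¹ := by
  have h : Fintype.card G = Fintype.card X * (stabF G x₀).card := by
    rw [← Finset.card_univ, Finset.card_eq_sum_card_fiberwise (f := fun g : G => g • x₀)
      (t := Finset.univ) (by simp)]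
    rw [Finset.sum_const_nat (m := (stabF G x₀).card), Finset.card_univ]
    intro y _
    obtain ⟨a, rfl⟩ := MulAction.exists_smul_eq G x₀ y
    have := fibre_sum x₀ a (1 : G) (fun _ => 1)
    simpa using this
  have hG : (Fintype.card G : ℂ) ≠ 0 := by simp
  have hS := stabF_card_ne (G := G) x₀
  field_simp
  rw [h]; push_cast; ring

/-- average over the stabilizer -/
noncomputable def avg {V : Type*} [AddCommGroup V] [Module ℂ V] (ρ : G →* V →ₗ[ℂ] V) (x₀ : X) :
    V →ₗ[ℂ] V := ((stabF G x₀).card : ℂ)⁻¹ • ∑ k ∈ stabF G x₀, ρ k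

variable {V : Type*} [AddCommGroup V] [Module ℂ V] (ρ : G →* V →ₗ[ℂ] V)

lemma avg_apply (x₀ : X) (v : V) :
    avg ρ x₀ v = ((stabF G x₀).card : ℂ)⁻¹ • ∑ k ∈ stabF G x₀, ρ k v := by
  simp [avg]

lemma sum_stab_inv {M : Type*} [AddCommMonoid M] (x₀ : X) (F : G → M) :
    ∑ k ∈ stabF G x₀, F k⁻¹ = ∑ k ∈ stabF G x₀, F k := by
  refine Finset.sum_bij' (fun k _ => k⁻¹) (fun k _ => k⁻¹) ?_ ?_ ?_ ?_ ?_
  · intro k hk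
    rw [mem_stabF] at *
    rw [inv_smul_eq_iff, hk]
  · intro k hk
    rw [mem_stabF] at *
    rw [inv_smul_eq_iff, hk]
  all_goals simp

lemma sum_stab_mul {M : Type*} [AddCommMonoid M] (x₀ : X) (F : G → M) (h : G) (hh : h • x₀ = x₀) :
    ∑ k ∈ stabF G x₀, F (k * h) = ∑ k ∈ stabF G x₀, F k := by
  have hh' : h⁻¹ • x₀ = x₀ := by rw [inv_smul_eq_iff, hh]
  refine Finset.sum_bij' (fun k _ => k * h) (fun k _ => k * h⁻¹) ?_ ?_ ?_ ?_ ?_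
  all_goals simp +contextual [mem_stabF, mul_smul, hh, hh']

lemma sum_stab_mul_left {M : Type*} [AddCommMonoid M] (x₀ : X) (F : G → M) (h : G)
    (hh : h • x₀ = x₀) :
    ∑ k ∈ stabF G x₀, F (h * k) = ∑ k ∈ stabF G x₀, F k := by
  have hh' : h⁻¹ • x₀ = x₀ := by rw [inv_smul_eq_iff, hh]
  refine Finset.sum_bij' (fun k _ => h * k) (fun k _ => h⁻¹ * k) ?_ ?_ ?_ ?_ ?_
  all_goals simp +contextual [mem_stabF, mul_smul, hh, hh']

lemma rho_avg (x₀ : X) (h : G) (hh : h • x₀ = x₀) (v : V) : ρ h (avg ρ x₀ v) = avg ρ x₀ v := by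
  rw [avg_apply, map_smul, map_sum, ← sum_stab_mul_left x₀ (fun k => ρ k v) h hh]
  simp

lemma avg_avg (x₀ : X) (v : V) : avg ρ x₀ (avg ρ x₀ v) = avg ρ x₀ v := by
  rw [avg_apply ρ x₀ (avg ρ x₀ v), Finset.sum_congr rfl
    (fun k hk => rho_avg ρ x₀ k (mem_stabF.1 hk) v), Finset.sum_const, ← Nat.cast_smul_eq_nsmul ℂ,
    inv_smul_smul₀ (stabF_card_ne x₀)]

lemma trace_formula (htrans : MulAction.IsPretransitive G X) (x₀ : X) (a b : G) :
    ((Fintype.card X : ℂ) / (Fintype.card G : ℂ)) *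
      ∑ g ∈ Finset.univ.filter (fun g : G => g • (b • x₀) = a • x₀),
        LinearMap.trace ℂ V (ρ g⁻¹) = LinearMap.trace ℂ V (avg ρ x₀ ∘ₗ ρ (a⁻¹ * b)) := by
  rw [card_ratio htrans x₀, fibre_sum x₀ a b (fun g => LinearMap.trace ℂ V (ρ g⁻¹)), avg,
    LinearMap.smul_comp, map_smul, smul_eq_mul, ← Module.End.mul_eq_comp, Finset.sum_mul, map_sum,
    ← sum_stab_inv x₀ (fun k => LinearMap.trace ℂ V (ρ k * ρ (a⁻¹ * b)))]
  congr 1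
  refine Finset.sum_congr rfl fun k _ => ?_
  have : (a * k * b⁻¹)⁻¹ = b * (k⁻¹ * a⁻¹) := by group
  rw [this, map_mul, LinearMap.trace_mul_comm, ← map_mul, ← map_mul]
  congr 2
  group

/-- The Hecke operators commute. -/
lemma hecke_comm
    (hcomm : ∀ T S : (X → ℂ) →ₗ[ℂ] (X → ℂ),
      (∀ (g : G) (ψ : X → ℂ), T (fun x => ψ (g⁻¹ • x)) = fun x => T ψ (g⁻¹ • x)) →
      (∀ (g : G) (ψ : X → ℂ), S (fun x => ψ (g⁻¹ • x)) = fun x => S ψ (g⁻¹ • x)) →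
      T ∘ₗ S = S ∘ₗ T) (x₀ : X) (a b : G) (ψ : X → ℂ) :
    ∑ k ∈ stabF G x₀, ∑ l ∈ stabF G x₀, ψ ((k * a * l * b) • x₀) =
    ∑ k ∈ stabF G x₀, ∑ l ∈ stabF G x₀, ψ ((k * b * l * a) • x₀) := by
  let T : G → (X → ℂ) →ₗ[ℂ] (X → ℂ) := fun a =>
    { toFun := fun ψ x => ∑ g ∈ Finset.univ.filter (fun g : G => g • x₀ = x), ψ ((g * a) • x₀)
      map_add' := fun ψ φ => by ext x; simp [Finset.sum_add_distrib]
      map_smul' := fun c ψ => by ext x; simp [Finset.mul_sum] }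
  have hT : ∀ a (g : G) (ψ : X → ℂ), T a (fun x => ψ (g⁻¹ • x)) = fun x => T a ψ (g⁻¹ • x) := by
    intro a g ψ
    ext x
    refine Finset.sum_bij' (fun h _ => g⁻¹ * h) (fun h _ => g * h) ?_ ?_ ?_ ?_ ?_
    · simp +contextual [mul_smul]
    · simp +contextual [mul_smul]
    · simp
    · simp
    · simp [mul_smul]
  have hTa : ∀ a (ψ : X → ℂ) (g : G), T a ψ (g • x₀) = ∑ k ∈ stabF G x₀, ψ ((g * k * a) • x₀) := by
    intro a ψ g
    have := fibre_sum x₀ g 1 (fun g => ψ ((g * a) • x₀))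
    simp only [one_smul, inv_one, mul_one] at this
    exact this
  have h := congrFun (LinearMap.congr_fun (hcomm (T a) (T b) (hT a) (hT b)) ψ) ((1 : G) • x₀)
  simp only [LinearMap.comp_apply, hTa] at h
  simpa using h

lemma avg_comm [FiniteDimensional ℂ V]
    (hcomm : ∀ T S : (X → ℂ) →ₗ[ℂ] (X → ℂ),
      (∀ (g : G) (ψ : X → ℂ), T (fun x => ψ (g⁻¹ • x)) = fun x => T ψ (g⁻¹ • x)) →
      (∀ (g : G) (ψ : X → ℂ), S (fun x => ψ (g⁻¹ • x)) = fun x => S ψ (g⁻¹ • x)) →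
      T ∘ₗ S = S ∘ₗ T) (htrans : MulAction.IsPretransitive G X) (x₀ : X) (a b : G) (u : V) :
    avg ρ x₀ (ρ a (avg ρ x₀ (ρ b (avg ρ x₀ u)))) = avg ρ x₀ (ρ b (avg ρ x₀ (ρ a (avg ρ x₀ u)))) := by
  rw [← sub_eq_zero, ← Module.forall_dual_apply_eq_zero_iff ℂ]
  intro f
  rw [map_sub, sub_eq_zero]
  set w := avg ρ x₀ u with hw
  choose s hs using fun x : X => MulAction.exists_smul_eq G x₀ x
  have hψ : ∀ g : G, f (ρ (s (g • x₀)) w) = f (ρ g w) := by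
    intro g
    have h1 : (g⁻¹ * s (g • x₀)) • x₀ = x₀ := by rw [mul_smul, hs, inv_smul_smul]
    have h2 := rho_avg ρ x₀ _ h1 u
    rw [← hw] at h2
    conv_rhs => rw [← h2, ← Module.End.mul_apply, ← map_mul, mul_inv_cancel_left]
  have h := hecke_comm hcomm x₀ a b (fun x => f (ρ (s x) w))
  simp only [hψ] at h
  have key : ∀ a b : G, f (avg ρ x₀ (ρ a (avg ρ x₀ (ρ b w)))) =
      ((stabF G x₀).card : ℂ)⁻¹ * (((stabF G x₀).card : ℂ)⁻¹ *
        ∑ k ∈ stabF G x₀, ∑ l ∈ stabF G x₀, f (ρ (k * a * l * b) w)) := by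
    intro a b
    simp only [avg_apply ρ x₀ (ρ b w), avg_apply ρ x₀ (ρ a _), map_smul, map_sum, map_mul,
      Module.End.mul_apply, smul_eq_mul, Finset.mul_sum]
    exact Finset.sum_comm
  rw [key, key, h]

lemma forward (htrans : MulAction.IsPretransitive G X)
    (hcomm : ∀ T S : (X → ℂ) →ₗ[ℂ] (X → ℂ),
      (∀ (g : G) (ψ : X → ℂ), T (fun x => ψ (g⁻¹ • x)) = fun x => T ψ (g⁻¹ • x)) →
      (∀ (g : G) (ψ : X → ℂ), S (fun x => ψ (g⁻¹ • x)) = fun x => S ψ (g⁻¹ • x)) →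
      T ∘ₗ S = S ∘ₗ T)
    (ξ : X × X → ℂ) (V : FDRep ℂ G) (hV : CategoryTheory.Simple V)
    (hne : ∃ (ψ : X → ℂ) (x : X),
        (V.character 1 / (Fintype.card G : ℂ)) *
          ∑ g : G, V.character g⁻¹ * ψ (g⁻¹ • x) ≠ 0)
    (hξ : ∀ x y : X, ξ (x, y) =
        ((Fintype.card X : ℂ) / (Fintype.card G : ℂ)) *
          ∑ g ∈ Finset.univ.filter (fun g : G => g • y = x), V.character g⁻¹) (x₀ : X) :
    ξ (x₀, x₀) = 1 ∧
      ∀ x₁ x₂ : X,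
        (1 / ((stabF G x₀).card : ℂ)) * ∑ g ∈ stabF G x₀, ξ (g • x₁, x₂) =
          ξ (x₁, x₀) * ξ (x₀, x₂) := by
  have hξ' : ∀ a b : G, ξ (a • x₀, b • x₀) =
      LinearMap.trace ℂ V (avg V.ρ x₀ ∘ₗ V.ρ (a⁻¹ * b)) := by
    intro a b
    rw [hξ, ← trace_formula V.ρ htrans]
    rfl
  have he : avg V.ρ x₀ ≠ 0 := by
    intro h0
    obtain ⟨ψ, x, hψ⟩ := hne
    apply hψ
    have hz : ∀ y, ∑ g ∈ Finset.univ.filter (fun g : G => g • y = x), V.character g⁻¹ = 0 := by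
      intro y
      obtain ⟨a, rfl⟩ := MulAction.exists_smul_eq G x₀ x
      obtain ⟨b, rfl⟩ := MulAction.exists_smul_eq G x₀ y
      have h1 := hξ' a b
      rw [h0, LinearMap.zero_comp, map_zero, hξ] at h1
      refine (mul_eq_zero.1 h1).resolve_left ?_
      simp
    rw [← Finset.sum_fiberwise (s := Finset.univ) (g := fun g : G => g⁻¹ • x),
      Finset.sum_eq_zero, mul_zero]
    intro y _
    have h2 : ∑ g ∈ Finset.univ.filter (fun g : G => g⁻¹ • x = y), V.character g⁻¹ * ψ (g⁻¹ • x) =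
        (∑ g ∈ Finset.univ.filter (fun g : G => g • y = x), V.character g⁻¹) * ψ y := by
      rw [Finset.sum_mul]
      refine Finset.sum_congr ?_ ?_
      · ext g
        simp only [mem_filter, mem_univ, true_and]
        rw [inv_smul_eq_iff, eq_comm]
      · intro g hg
        simp only [mem_filter, mem_univ, true_and] at hg
        rw [← hg, inv_smul_smul]
    rw [h2, hz, zero_mul]
  obtain ⟨v, φ, hφ, hev⟩ := aux_rank_one V.ρ (avg V.ρ x₀) (fun v hv => simple_span V v hv)
    (avg_avg V.ρ x₀) he (avg_comm V.ρ hcomm htrans x₀)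
  have hξ2 : ∀ a b : G, ξ (a • x₀, b • x₀) = φ (V.ρ (a⁻¹ * b) v) := by
    intro a b
    rw [hξ']
    have : avg V.ρ x₀ ∘ₗ V.ρ (a⁻¹ * b) = (φ ∘ₗ V.ρ (a⁻¹ * b)).smulRight v := by
      ext u
      simp [hev]
    rw [this, LinearMap.trace_smulRight]
    rfl
  constructor
  · have := hξ2 1 1
    simpa [hφ] using this
  · intro x₁ x₂
    obtain ⟨a, rfl⟩ := MulAction.exists_smul_eq G x₀ x₁
    obtain ⟨b, rfl⟩ := MulAction.exists_smul_eq G x₀ x₂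
    have h1 := hξ2 a 1
    have h2 := hξ2 1 b
    simp only [one_smul, mul_one, inv_one, one_mul] at h1 h2
    rw [h1, h2]
    have h3 : φ (V.ρ a⁻¹ (avg V.ρ x₀ (V.ρ b v))) = φ (V.ρ a⁻¹ v) * φ (V.ρ b v) := by
      rw [hev, map_smul, map_smul, smul_eq_mul, mul_comm]
    rw [← h3, avg_apply, map_smul, map_smul, smul_eq_mul, map_sum, map_sum, one_div,
      ← sum_stab_inv x₀]
    congr 1
    refine Finset.sum_congr rfl fun k _ => ?_
    rw [smul_smul, hξ2, mul_inv_rev, inv_inv, map_mul, map_mul]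
    rfl

/-- permutation representation -/
def permRep (G X : Type) [Group G] [MulAction G X] : Representation ℂ G (X → ℂ) where
  toFun g :=
    { toFun := fun ψ x => ψ (g⁻¹ • x)
      map_add' := fun _ _ => rfl
      map_smul' := fun _ _ => rfl }
  map_one' := by ext; simp
  map_mul' a b := by
    refine LinearMap.ext fun ψ => funext fun x => ?_
    simp [mul_smul]

lemma backward (htrans : MulAction.IsPretransitive G X)
    (ξ : X × X → ℂ)
    (hinv : ∀ (g : G) (x y : X), ξ (g • x, g • y) = ξ (x, y))
    (h1 : ∀ x₀, ξ (x₀, x₀) = 1)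
    (h2 : ∀ x₀ x₁ x₂ : X,
        (1 / ((stabF G x₀).card : ℂ)) * ∑ g ∈ stabF G x₀, ξ (g • x₁, x₂) =
          ξ (x₁, x₀) * ξ (x₀, x₂)) :
    ∃ V : FDRep ℂ G, CategoryTheory.Simple V ∧
      (∃ (ψ : X → ℂ) (x : X),
        (V.character 1 / (Fintype.card G : ℂ)) *
          ∑ g : G, V.character g⁻¹ * ψ (g⁻¹ • x) ≠ 0) ∧
      ∀ x y : X, ξ (x, y) =
        ((Fintype.card X : ℂ) / (Fintype.card G : ℂ)) *
          ∑ g ∈ Finset.univ.filter (fun g : G => g • y = x), V.character g⁻¹ := by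
  let x₀ : X := Classical.arbitrary X
  let π := permRep G X
  have hπ : ∀ g ψ x, π g ψ x = ψ (g⁻¹ • x) := fun _ _ _ => rfl
  let f : X → X → ℂ := fun y x => ξ (x, y)
  have hπf : ∀ g y, π g (f y) = f (g • y) := by
    intro g y
    ext x
    rw [hπ]
    change ξ (g⁻¹ • x, y) = ξ (x, g • y)
    rw [← hinv g, smul_inv_smul]
  let W : Subrepresentation π :=
    { toSubmodule := Submodule.span ℂ (Set.range f)
      apply_mem_toSubmodule := by
        intro g v hv
        induction hv using Submodule.span_induction with
        | mem x h =>
          obtain ⟨y, rfl⟩ := h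
          rw [hπf]
          exact Submodule.subset_span ⟨_, rfl⟩
        | zero => simp
        | add x y _ _ hx hy => rw [map_add]; exact Submodule.add_mem _ hx hy
        | smul r x _ hx => rw [map_smul]; exact Submodule.smul_mem _ _ hx }
  have hfW : ∀ y, f y ∈ W.toSubmodule := fun y => Submodule.subset_span ⟨y, rfl⟩
  let σ := W.toRepresentation
  have hσ : ∀ g (u : W.toSubmodule), ((σ g u : W.toSubmodule) : X → ℂ) = π g u := fun _ _ => rfl
  let v : W.toSubmodule := ⟨f x₀, hfW x₀⟩
  have havgπ : ∀ ψ ∈ W.toSubmodule, avg π x₀ ψ = ψ x₀ • f x₀ := by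
    intro ψ hψ
    induction hψ using Submodule.span_induction with
    | mem x h =>
      obtain ⟨y, rfl⟩ := h
      ext x
      rw [avg_apply]
      simp only [Pi.smul_apply, Finset.sum_apply, hπ, smul_eq_mul]
      have := h2 x₀ x y
      rw [one_div, ← sum_stab_inv x₀] at this
      rw [mul_comm (f y x₀)]
      exact this
    | zero => simp
    | add x y _ _ hx hy => rw [map_add, hx, hy, Pi.add_apply, add_smul]
    | smul r x _ hx => rw [map_smul, hx, Pi.smul_apply, smul_assoc]
  have havg : ∀ u : W.toSubmodule, avg σ x₀ u = (u : X → ℂ) x₀ • v := by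
    intro u
    apply Subtype.ext
    rw [Submodule.coe_smul, ← havgπ u u.2, avg_apply, avg_apply]
    simp [hσ]
  have hvne : v ≠ 0 := by
    intro h
    have : f x₀ x₀ = 0 := congrFun (congrArg Subtype.val h) x₀
    have h11 : f x₀ x₀ = 1 := h1 x₀
    rw [h11] at this
    exact one_ne_zero this
  have hirr : σ.IsIrreducible := by
    have hnt : Nontrivial (Subrepresentation σ) := by
      refine ⟨⟨⊥, ⊤, fun h => hvne ?_⟩⟩
      have hv : v ∈ (⊤ : Subrepresentation σ).toSubmodule := Submodule.mem_top
      rw [← h] at hv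
      exact (Submodule.mem_bot ℂ).1 hv
    refine { eq_bot_or_eq_top := fun U => ?_ }
    by_cases hU : U.toSubmodule = ⊥
    · left
      exact Subrepresentation.toSubmodule_injective hU
    right
    apply Subrepresentation.toSubmodule_injective
    obtain ⟨u, huU, hu0⟩ := Submodule.exists_mem_ne_zero_of_ne_bot hU
    obtain ⟨x, hx⟩ : ∃ x, (u : X → ℂ) x ≠ 0 := by
      by_contra! h
      exact hu0 (Subtype.ext (funext h))
    obtain ⟨a, rfl⟩ := MulAction.exists_smul_eq G x₀ x
    have hmem : avg σ x₀ (σ a⁻¹ u) ∈ U.toSubmodule := by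
      rw [avg_apply]
      exact Submodule.smul_mem _ _ (Submodule.sum_mem _ fun k _ =>
        U.apply_mem_toSubmodule k (U.apply_mem_toSubmodule _ huU))
    rw [havg, hσ, hπ, inv_inv, Submodule.smul_mem_iff _ hx] at hmem
    change U.toSubmodule = ⊤
    rw [eq_top_iff]
    rintro ⟨w, hw⟩ -
    have hle : W.toSubmodule ≤ U.toSubmodule.map W.toSubmodule.subtype := by
      refine Submodule.span_le.2 ?_
      rintro _ ⟨y, rfl⟩
      obtain ⟨b, rfl⟩ := MulAction.exists_smul_eq G x₀ y
      exact ⟨σ b v, U.apply_mem_toSubmodule b hmem, hπf b x₀⟩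
    obtain ⟨w', hw', hww⟩ := hle hw
    have : w' = ⟨w, hw⟩ := Subtype.ext hww
    rwa [← this]
  have hformula : ∀ x y : X, ξ (x, y) =
        ((Fintype.card X : ℂ) / (Fintype.card G : ℂ)) *
          ∑ g ∈ Finset.univ.filter (fun g : G => g • y = x), (FDRep.of σ).character g⁻¹ := by
    intro x y
    obtain ⟨a, rfl⟩ := MulAction.exists_smul_eq G x₀ x
    obtain ⟨b, rfl⟩ := MulAction.exists_smul_eq G x₀ y
    refine Eq.trans ?_ (trace_formula σ htrans x₀ a b).symm
    let ev : W.toSubmodule →ₗ[ℂ] ℂ := (LinearMap.proj x₀) ∘ₗ W.toSubmodule.subtype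
    have : avg σ x₀ ∘ₗ σ (a⁻¹ * b) = (ev ∘ₗ σ (a⁻¹ * b)).smulRight v := by
      refine LinearMap.ext fun u => ?_
      rw [LinearMap.comp_apply, havg]
      rfl
    rw [this, LinearMap.trace_smulRight]
    change _ = ξ ((a⁻¹ * b)⁻¹ • x₀, x₀)
    rw [← hinv b ((a⁻¹ * b)⁻¹ • x₀)]
    congr 2
    simp [mul_smul]
  refine ⟨FDRep.of σ, irr_simple σ, ⟨Pi.single x₀ 1, x₀, ?_⟩, hformula⟩
  have hf0 := hformula x₀ x₀
  rw [h1] at hf0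
  have hsum : ∑ g : G, (FDRep.of σ).character g⁻¹ * (Pi.single x₀ 1 : X → ℂ) (g⁻¹ • x₀) =
      ∑ g ∈ Finset.univ.filter (fun g : G => g • x₀ = x₀), (FDRep.of σ).character g⁻¹ := by
    rw [Finset.sum_filter]
    refine Finset.sum_congr rfl fun g _ => ?_
    have : g⁻¹ • x₀ = x₀ ↔ g • x₀ = x₀ := by rw [inv_smul_eq_iff, eq_comm]
    simp [Pi.single_apply, this]
  rw [hsum]
  refine mul_ne_zero (div_ne_zero ?_ (by simp)) fun h => by simp [h] at hf0
  rw [FDRep.char_one]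
  have : Nontrivial W.toSubmodule := ⟨⟨v, 0, hvne⟩⟩
  have h5 : Module.finrank ℂ W.toSubmodule ≠ 0 := Module.finrank_pos.ne'
  exact_mod_cast h5

end

/-- Characterization of spherical functions on a finite symmetric space (Theorem 1).
`G` is a finite group acting transitively on a nonempty finite set `X`, such that the
algebra of `G`-equivariant endomorphisms of `ℂ^X` is commutative.  For a `G`-invariant
`ξ : X × X → ℂ`, the following are equivalent: (a) there is an irreducible representation
`V` of `G` (with character `χ`) such that the projection
`P_χ = (χ(1)/|G|) Σ_g χ(g⁻¹) ρ(g)` is nonzero and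
`ξ(x,y) = (|X|/|G|) Σ_{g • y = x} χ(g⁻¹)`; (b) `ξ(x₀,x₀) = 1` for all `x₀`, and
`(1/|G_{x₀}|) Σ_{g ∈ G_{x₀}} ξ(g•x₁, x₂) = ξ(x₁,x₀) ξ(x₀,x₂)` for all `x₀, x₁, x₂`. -/
theorem stmt_0 {G X : Type} [Group G] [Fintype G] [Fintype X] [Nonempty X]
    [MulAction G X] [DecidableEq X]
    (htrans : MulAction.IsPretransitive G X)
    (hcomm : ∀ T S : (X → ℂ) →ₗ[ℂ] (X → ℂ),
      (∀ (g : G) (ψ : X → ℂ), T (fun x => ψ (g⁻¹ • x)) = fun x => T ψ (g⁻¹ • x)) →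
      (∀ (g : G) (ψ : X → ℂ), S (fun x => ψ (g⁻¹ • x)) = fun x => S ψ (g⁻¹ • x)) →
      T ∘ₗ S = S ∘ₗ T)
    (ξ : X × X → ℂ)
    (hinv : ∀ (g : G) (x y : X), ξ (g • x, g • y) = ξ (x, y)) :
    (∃ V : FDRep ℂ G, CategoryTheory.Simple V ∧
      (∃ (ψ : X → ℂ) (x : X),
        (V.character 1 / (Fintype.card G : ℂ)) *
          ∑ g : G, V.character g⁻¹ * ψ (g⁻¹ • x) ≠ 0) ∧
      ∀ x y : X, ξ (x, y) =
        ((Fintype.card X : ℂ) / (Fintype.card G : ℂ)) *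
          ∑ g ∈ Finset.univ.filter (fun g : G => g • y = x), V.character g⁻¹)
    ↔
    ((∀ x₀ : X, ξ (x₀, x₀) = 1) ∧
      ∀ x₀ x₁ x₂ : X,
        (1 / ((Finset.univ.filter (fun g : G => g • x₀ = x₀)).card : ℂ)) *
            ∑ g ∈ Finset.univ.filter (fun g : G => g • x₀ = x₀), ξ (g • x₁, x₂) =
          ξ (x₁, x₀) * ξ (x₀, x₂)) := by
  constructor
  · rintro ⟨V, hV, hne, hξ⟩
    have h := forward htrans hcomm ξ V hV hne hξ
    exact ⟨fun x₀ => (h x₀).1, fun x₀ => (h x₀).2⟩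
  · rintro ⟨h1, h2⟩
    exact backward htrans ξ hinv h1 h2
end

section
/- Let G be a finite group acting on a finite set X such that the action is symmetric, i.e. for all x, x' ∈ X there exists g ∈ G with g·x = x' and g·x' = x. Then the algebra of linear endomorphisms of ℂ^X that commute with the permutation action of G (i.e. all T with T ∘ ρ(g) = ρ(g) ∘ T for every g ∈ G, where (ρ(g)ψ)(x) = ψ(g⁻¹·x)) is commutative. -/
open Classical in
theorem comm_symm_aux {G X : Type*} [Group G] [Fintype X] [MulAction G X]
    (hsym : ∀ x x' : X, ∃ g : G, g • x = x' ∧ g • x' = x)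
    (A : (X → ℂ) →ₗ[ℂ] (X → ℂ))
    (hA : ∀ (g : G) (ψ : X → ℂ), A (fun x => ψ (g⁻¹ • x)) = fun x => A ψ (g⁻¹ • x)) :
    (LinearMap.toMatrix' A).transpose = LinearMap.toMatrix' A := by
  ext x y
  obtain ⟨g, h1, h2⟩ := hsym x y
  have e : (fun z => (Pi.single x (1 : ℂ) : X → ℂ) (g⁻¹ • z)) = Pi.single y 1 := by
    funext z
    simp only [Pi.single_apply, inv_smul_eq_iff, h1]
  have h := congrFun (hA g (Pi.single x 1)) x
  rw [e] at h
  have h3 : g⁻¹ • x = y := by rw [inv_smul_eq_iff, h2]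
  simp only [h3] at h
  simp only [Matrix.transpose_apply, LinearMap.toMatrix'_apply]
  exact h.symm

/-- If a finite group `G` acts symmetrically on a finite set `X` (for all `x, x'` there is
`g` with `g•x = x'` and `g•x' = x`), then the algebra of linear endomorphisms of `ℂ^X`
commuting with the permutation representation `ρ`, `(ρ(g)ψ)(x) = ψ(g⁻¹•x)`, is
commutative. -/
theorem stmt_1 {G X : Type*} [Group G] [Fintype G] [Fintype X] [MulAction G X]
    (hsym : ∀ x x' : X, ∃ g : G, g • x = x' ∧ g • x' = x)
    (T S : (X → ℂ) →ₗ[ℂ] (X → ℂ))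
    (hT : ∀ (g : G) (ψ : X → ℂ), T (fun x => ψ (g⁻¹ • x)) = fun x => T ψ (g⁻¹ • x))
    (hS : ∀ (g : G) (ψ : X → ℂ), S (fun x => ψ (g⁻¹ • x)) = fun x => S ψ (g⁻¹ • x)) :
    T ∘ₗ S = S ∘ₗ T := by
  classical
  have h := comm_symm_aux hsym (T ∘ₗ S) (by
    intro g ψ
    simp only [LinearMap.comp_apply, hS, hT])
  apply LinearMap.toMatrix'.injective
  rw [← h, LinearMap.toMatrix'_comp, LinearMap.toMatrix'_comp, Matrix.transpose_mul,
    comm_symm_aux hsym T hT, comm_symm_aux hsym S hS]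
end

section
/- Let Ω be a finite set with |Ω| = n and let 0 ≤ r1, r2 ≤ n. The complex vector space of linear maps T : (X_{r1} → ℂ) → (X_{r2} → ℂ) that commute with the permutation action of the symmetric group S(Ω) (i.e. T ∘ ρ_{r1}(g) = ρ_{r2}(g) ∘ T for all permutations g of Ω) has dimension min(r1, n − r1, r2, n − r2) + 1. -/
/-- The action of a permutation `g` of `Ω` on `r`-element subsets, by taking images. -/
def permAct {Ω : Type*} [DecidableEq Ω] (g : Equiv.Perm Ω) {r : ℕ}
    (x : {x : Finset Ω // x.card = r}) : {x : Finset Ω // x.card = r} :=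
  ⟨x.1.image g, by rw [Finset.card_image_of_injective _ g.injective]; exact x.2⟩

/-- The permutation representation `ρ_r` of `S(Ω)` on functions `X_r → ℂ`:
`(ρ_r(g)ψ)(x) = ψ(g⁻¹(x))`. -/
def rho {Ω : Type*} [DecidableEq Ω] (g : Equiv.Perm Ω) {r : ℕ}
    (ψ : {x : Finset Ω // x.card = r} → ℂ) : {x : Finset Ω // x.card = r} → ℂ :=
  fun x => ψ (permAct g⁻¹ x)

/-- The space of linear maps `(X_{r1} → ℂ) → (X_{r2} → ℂ)` intertwining the
permutation representations of `S(Ω)`. -/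
noncomputable def IntSp (Ω : Type*) [Fintype Ω] [DecidableEq Ω] (r1 r2 : ℕ) :
    Submodule ℂ
      (({x : Finset Ω // x.card = r1} → ℂ) →ₗ[ℂ] ({x : Finset Ω // x.card = r2} → ℂ)) where
  carrier := {T | ∀ (g : Equiv.Perm Ω) (ψ), T (rho g ψ) = rho g (T ψ)}
  add_mem' := by
    intro a b ha hb g ψ
    funext x
    simp [LinearMap.add_apply, ha g ψ, hb g ψ, rho]
  zero_mem' := by
    intro g ψ
    funext x
    simp [rho]
  smul_mem' := by
    intro c a ha g ψ
    funext x
    simp [LinearMap.smul_apply, ha g ψ, rho]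

theorem exists_perm_aux {Ω : Type*} [Fintype Ω] [DecidableEq Ω] (x y x' y' : Finset Ω)
    (hx : x.card = x'.card) (hy : y.card = y'.card) (hxy : (x ∩ y).card = (x' ∩ y').card) :
    ∃ g : Equiv.Perm Ω, x.image g = x' ∧ y.image g = y' := by
  let c : Finset Ω → Finset Ω → Ω → Bool × Bool := fun x y w => (decide (w ∈ x), decide (w ∈ y))
  have key : ∀ b, Fintype.card {w // c x y w = b} = Fintype.card {w // c x' y' w = b} := by
    have h0 : ∀ (x y : Finset Ω) b, Fintype.card {w // c x y w = b} =
        ((if b.1 then x else xᶜ) ∩ (if b.2 then y else yᶜ)).card := by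
      intro x y b
      rw [Fintype.card_subtype]
      congr 1
      ext w
      rcases b with ⟨_ | _, _ | _⟩ <;> simp [c]
    have e1 : ∀ x y : Finset Ω, (x ∩ yᶜ).card + (x ∩ y).card = x.card := by
      intro x y
      have := Finset.card_sdiff_add_card_inter x y
      rwa [Finset.sdiff_eq_inter_compl] at this
    have a1 := e1 x y
    have a2 := e1 x' y'
    have a3 := e1 y x
    have a4 := e1 y' x'
    have a5 := e1 xᶜ y
    have a6 := e1 x'ᶜ y'
    have a7 := Finset.card_add_card_compl x
    have a8 := Finset.card_add_card_compl x'
    rw [Finset.inter_comm y x, Finset.inter_comm y xᶜ] at a3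
    rw [Finset.inter_comm y' x', Finset.inter_comm y' x'ᶜ] at a4
    intro b
    rw [h0, h0]
    rcases b with ⟨_ | _, _ | _⟩ <;> simp only [if_true, if_false, Bool.false_eq_true] <;> omega
  let g : Equiv.Perm Ω := (Equiv.sigmaFiberEquiv (c x y)).symm.trans
    ((Equiv.sigmaCongrRight fun b => Fintype.equivOfCardEq (key b)).trans
      (Equiv.sigmaFiberEquiv (c x' y')))
  have hg : ∀ w, c x' y' (g w) = c x y w := by
    intro w
    exact (Fintype.equivOfCardEq (key (c x y w)) ⟨w, rfl⟩).2
  have h1 : ∀ w, g w ∈ x' ↔ w ∈ x := by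
    intro w
    have := congrArg Prod.fst (hg w)
    simpa [c] using this
  have h2 : ∀ w, g w ∈ y' ↔ w ∈ y := by
    intro w
    have := congrArg Prod.snd (hg w)
    simpa [c] using this
  refine ⟨g, ?_, ?_⟩
  · refine Finset.eq_of_subset_of_card_le ?_ ?_
    · intro w hw
      obtain ⟨v, hv, rfl⟩ := Finset.mem_image.1 hw
      exact (h1 v).2 hv
    · rw [Finset.card_image_of_injective _ g.injective, hx]
  · refine Finset.eq_of_subset_of_card_le ?_ ?_
    · intro w hw
      obtain ⟨v, hv, rfl⟩ := Finset.mem_image.1 hw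
      exact (h2 v).2 hv
    · rw [Finset.card_image_of_injective _ g.injective, hy]

theorem exists_pair_aux {Ω : Type*} [Fintype Ω] [DecidableEq Ω] (n r1 r2 k : ℕ)
    (hn : Fintype.card Ω = n) (h2 : r2 ≤ n)
    (hk : k ∈ Finset.Icc (r1 + r2 - n) (min r1 r2)) :
    ∃ (x : {x : Finset Ω // x.card = r1}) (y : {x : Finset Ω // x.card = r2}),
      (x.1 ∩ y.1).card = k := by
  rw [Finset.mem_Icc] at hk
  obtain ⟨y, -, hy⟩ := Finset.exists_subset_card_eq (s := (Finset.univ : Finset Ω)) (n := r2)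
    (by rw [Finset.card_univ]; omega)
  obtain ⟨u, hu, huc⟩ := Finset.exists_subset_card_eq (s := y) (n := k) (by omega)
  obtain ⟨v, hv, hvc⟩ := Finset.exists_subset_card_eq (s := yᶜ) (n := r1 - k)
    (by rw [Finset.card_compl]; omega)
  have hvy : Disjoint v y := (disjoint_compl_left (a := y)).mono_left hv
  refine ⟨⟨u ∪ v, ?_⟩, ⟨y, hy⟩, ?_⟩
  · rw [Finset.card_union_of_disjoint (hvy.symm.mono_left hu)]
    omega
  · change ((u ∪ v) ∩ y).card = k
    rw [Finset.union_inter_distrib_right, Finset.disjoint_iff_inter_eq_empty.1 hvy,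
      Finset.union_empty, Finset.inter_eq_left.2 hu, huc]

theorem inter_mem_aux {Ω : Type*} [Fintype Ω] [DecidableEq Ω] {n r1 r2 : ℕ}
    (hn : Fintype.card Ω = n)
    (x : {x : Finset Ω // x.card = r1}) (y : {x : Finset Ω // x.card = r2}) :
    (x.1 ∩ y.1).card ∈ Finset.Icc (r1 + r2 - n) (min r1 r2) := by
  have a1 := Finset.card_union_add_card_inter x.1 y.1
  have a2 := Finset.card_le_univ (x.1 ∪ y.1)
  have a3 := Finset.card_le_card (Finset.inter_subset_left (s₁ := x.1) (s₂ := y.1))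
  have a4 := Finset.card_le_card (Finset.inter_subset_right (s₁ := x.1) (s₂ := y.1))
  have := x.2
  have := y.2
  rw [Finset.mem_Icc]
  omega

theorem permAct_inv_aux {Ω : Type*} [DecidableEq Ω] (g : Equiv.Perm Ω) {r : ℕ}
    (x : {x : Finset Ω // x.card = r}) : permAct g⁻¹ (permAct g x) = x := by
  apply Subtype.ext
  simp [permAct, Finset.image_image]

theorem permAct_inv_aux' {Ω : Type*} [DecidableEq Ω] (g : Equiv.Perm Ω) {r : ℕ}
    (x : {x : Finset Ω // x.card = r}) : permAct g (permAct g⁻¹ x) = x := by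
  simpa using permAct_inv_aux g⁻¹ x

theorem permAct_inter_aux {Ω : Type*} [DecidableEq Ω] (g : Equiv.Perm Ω) {r s : ℕ}
    (x : {x : Finset Ω // x.card = r}) (y : {x : Finset Ω // x.card = s}) :
    ((permAct g x).1 ∩ (permAct g y).1).card = (x.1 ∩ y.1).card := by
  simp only [permAct]
  rw [← Finset.image_inter _ _ g.injective, Finset.card_image_of_injective _ g.injective]

theorem entry_aux {Ω : Type*} [Fintype Ω] [DecidableEq Ω] {r1 r2 : ℕ} (T : IntSp Ω r1 r2)
    (x x' : {x : Finset Ω // x.card = r1}) (y y' : {x : Finset Ω // x.card = r2})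
    (h : (x.1 ∩ y.1).card = (x'.1 ∩ y'.1).card) :
    T.1 (Pi.single x 1) y = T.1 (Pi.single x' 1) y' := by
  obtain ⟨g, hx, hy⟩ := exists_perm_aux x.1 y.1 x'.1 y'.1 (x.2.trans x'.2.symm)
    (y.2.trans y'.2.symm) h
  have hx' : permAct g x = x' := Subtype.ext hx
  have hy' : permAct g y = y' := Subtype.ext hy
  have e : rho g (Pi.single x (1 : ℂ)) = Pi.single x' 1 := by
    funext z
    by_cases hz : z = x'
    · subst hz
      rw [← hx']
      simp [rho, permAct_inv_aux]
    · have : permAct g⁻¹ z ≠ x := by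
        rintro rfl
        exact hz (by rw [← hx', permAct_inv_aux'])
      simp [rho, hz, this]
  have := congrFun (T.2 g (Pi.single x 1)) y'
  rw [e] at this
  rw [this, ← hy']
  simp [rho, permAct_inv_aux]

noncomputable def intEquiv {Ω : Type*} [Fintype Ω] [DecidableEq Ω] (n r1 r2 : ℕ)
    (hn : Fintype.card Ω = n) (h2 : r2 ≤ n) :
    IntSp Ω r1 r2 ≃ₗ[ℂ] ({k // k ∈ Finset.Icc (r1 + r2 - n) (min r1 r2)} → ℂ) where
  toFun T := fun k => T.1 (Pi.single (exists_pair_aux (Ω := Ω) n r1 r2 k.1 hn h2 k.2).choose 1)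
    (exists_pair_aux (Ω := Ω) n r1 r2 k.1 hn h2 k.2).choose_spec.choose
  map_add' S T := by
    funext k
    simp
  map_smul' c T := by
    funext k
    simp
  invFun a := ⟨
    { toFun := fun ψ y => ∑ x, a ⟨(x.1 ∩ y.1).card, inter_mem_aux hn x y⟩ * ψ x
      map_add' := by
        intro φ ψ
        funext y
        simp [mul_add, Finset.sum_add_distrib]
      map_smul' := by
        intro c ψ
        funext y
        simp only [Pi.smul_apply, smul_eq_mul, RingHom.id_apply, Finset.mul_sum]
        exact Finset.sum_congr rfl fun x _ => by ring }, by
    intro g ψ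
    funext y
    change ∑ x, a ⟨(x.1 ∩ y.1).card, inter_mem_aux hn x y⟩ * ψ (permAct g⁻¹ x) =
      ∑ x, a ⟨(x.1 ∩ (permAct g⁻¹ y).1).card, inter_mem_aux hn x (permAct g⁻¹ y)⟩ * ψ x
    refine Fintype.sum_equiv ⟨permAct g⁻¹, permAct g, permAct_inv_aux' g, permAct_inv_aux g⟩ _ _ ?_
    intro x
    simp only [Equiv.coe_fn_mk]
    congr 2
    exact Subtype.ext (permAct_inter_aux g⁻¹ x y).symm⟩
  left_inv T := by
    apply Subtype.ext
    refine LinearMap.pi_ext' fun x => LinearMap.ext_ring ?_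
    funext y
    simp only [LinearMap.comp_apply, LinearMap.coe_mk, AddHom.coe_mk, LinearMap.coe_single]
    rw [Finset.sum_eq_single x]
    · rw [Pi.single_eq_same, mul_one]
      exact entry_aux T _ _ _ _ (exists_pair_aux (Ω := Ω) n r1 r2 _ hn h2
        (inter_mem_aux hn x y)).choose_spec.choose_spec
    · intro z _ hz
      rw [Pi.single_eq_of_ne hz, mul_zero]
    · simp
  right_inv a := by
    funext k
    simp only [LinearMap.coe_mk, AddHom.coe_mk]
    rw [Finset.sum_eq_single (exists_pair_aux (Ω := Ω) n r1 r2 k.1 hn h2 k.2).choose]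
    · rw [Pi.single_eq_same, mul_one]
      congr 1
      exact Subtype.ext (exists_pair_aux (Ω := Ω) n r1 r2 k.1 hn h2 k.2).choose_spec.choose_spec
    · intro z _ hz
      rw [Pi.single_eq_of_ne hz, mul_zero]
    · simp

/-- The space of `S(Ω)`-intertwining linear maps `(X_{r1} → ℂ) → (X_{r2} → ℂ)` has
dimension `min(r1, n-r1, r2, n-r2) + 1`. -/
theorem stmt_3 {Ω : Type*} [Fintype Ω] [DecidableEq Ω] (n r1 r2 : ℕ)
    (hn : Fintype.card Ω = n) (h1 : r1 ≤ n) (h2 : r2 ≤ n) :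
    Module.finrank ℂ (IntSp Ω r1 r2) = min (min r1 (n - r1)) (min r2 (n - r2)) + 1 := by
  rw [(intEquiv (Ω := Ω) n r1 r2 hn h2).finrank_eq, Module.finrank_fintype_fun_eq_card,
    Fintype.card_coe, Nat.card_Icc]
  omega
end

section
/- Let 0 ≤ r ≤ n and 0 ≤ s ≤ min(r, n − r). Then for every integer k with 0 ≤ k ≤ s, the Hahn kernel with parameters r1 = r and r2 = s satisfies λ_s^{r,s}(k; n) = (−1)^k · (r − s + 1)_k / [n − r]_k. -/
/-- Falling factorial `z(z-1)⋯(z-k+1)` for complex `z`. -/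
noncomputable def cfall (z : ℂ) (k : ℕ) : ℂ := ∏ i ∈ Finset.range k, (z - i)

/-- Rising factorial `z(z+1)⋯(z+k-1)` for complex `z`. -/
noncomputable def crise (z : ℂ) (k : ℕ) : ℂ := ∏ i ∈ Finset.range k, (z + i)

/-- Generalized binomial coefficient `binom(t, j)` for complex `t`. -/
noncomputable def cbinom (t : ℂ) (j : ℕ) : ℂ := cfall t j / (Nat.factorial j)

/-- The Hahn kernel `λ_s^{r1,r2}(t; n)`. -/
noncomputable def hahn (n r1 r2 s : ℕ) (t : ℂ) : ℂ :=
  ∑ j ∈ Finset.range (s + 1),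
    (-1 : ℂ) ^ j * cbinom t j * cfall (s : ℂ) j * cfall ((n : ℂ) - s + 1) j /
      (cfall ((n : ℂ) - r1) j * cfall (r2 : ℂ) j)

lemma cfall_succ (z : ℂ) (k : ℕ) : cfall z (k+1) = cfall z k * (z - k) := by
  simp [cfall, Finset.prod_range_succ]

lemma cfall_succ_left (z : ℂ) (k : ℕ) : cfall z (k+1) = z * cfall (z - 1) k := by
  simp only [cfall, Finset.prod_range_succ']
  rw [mul_comm]
  congr 1
  · simp
  · apply Finset.prod_congr rfl
    intro i _
    push_cast
    ring

lemma cfall_nat (k j : ℕ) : cfall (k : ℂ) j = (k.descFactorial j : ℂ) := by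
  induction j with
  | zero => simp [cfall]
  | succ j ih =>
    rw [cfall_succ, ih, Nat.descFactorial_succ]
    rcases le_or_gt j k with h | h
    · push_cast [h]; ring
    · simp [Nat.descFactorial_of_lt h]

lemma cbinom_nat (k j : ℕ) : cbinom (k : ℂ) j = (k.choose j : ℂ) := by
  rw [cbinom, cfall_nat, Nat.descFactorial_eq_factorial_mul_choose]
  have : (j.factorial : ℂ) ≠ 0 := by exact_mod_cast j.factorial_ne_zero
  push_cast
  field_simp

lemma cfall_ne (a : ℂ) (k : ℕ) (h : ∀ i < k, a ≠ (i : ℂ)) : cfall a k ≠ 0 := by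
  rw [cfall, Finset.prod_ne_zero_iff]
  intro i hi
  exact sub_ne_zero.2 (h i (Finset.mem_range.1 hi))

lemma vand (k : ℕ) : ∀ (M : ℕ) (a b : ℂ), k < M → (∀ i < k, a ≠ (i : ℂ)) →
    ∑ j ∈ Finset.range M, (-1 : ℂ) ^ j * (k.choose j : ℂ) * (cfall b j / cfall a j) =
      (-1 : ℂ) ^ k * crise (b - a) k / cfall a k := by
  induction k with
  | zero =>
    intro M a b hM _
    obtain ⟨M, rfl⟩ : ∃ m, M = m + 1 := ⟨M - 1, by omega⟩
    rw [Finset.sum_range_succ']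
    simp [cfall, crise]
  | succ k ih =>
    intro M a b hM ha
    obtain ⟨M, rfl⟩ : ∃ m, M = m + 1 := ⟨M - 1, by omega⟩
    have h1 := ih (M + 1) a b (by omega) (fun i hi => ha i (by omega))
    have h2 := ih M (a - 1) (b - 1) (by omega) (fun i hi h => ha (i+1) (by omega) (by
      push_cast; rw [← h]; ring))
    have key : ∑ j ∈ Finset.range (M + 1),
          (-1 : ℂ) ^ j * ((k+1).choose j : ℂ) * (cfall b j / cfall a j) =
        ∑ j ∈ Finset.range (M + 1), (-1 : ℂ) ^ j * (k.choose j : ℂ) * (cfall b j / cfall a j)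
        - (b / a) * ∑ j ∈ Finset.range M,
          (-1 : ℂ) ^ j * (k.choose j : ℂ) * (cfall (b-1) j / cfall (a-1) j) := by
      rw [Finset.sum_range_succ', Finset.sum_range_succ' _ M, Finset.mul_sum,
        add_sub_right_comm, ← Finset.sum_sub_distrib]
      congr 1
      · apply Finset.sum_congr rfl
        intro j _
        rw [Nat.choose_succ_succ, cfall_succ_left b, cfall_succ_left a, mul_div_mul_comm]
        push_cast
        ring
      · simp
    rw [key, h1, h2]
    have a0 : a ≠ 0 := by simpa using ha 0 (by omega)
    have ak : a - k ≠ 0 := sub_ne_zero.2 (ha k (by omega))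
    have hA : cfall a k ≠ 0 := cfall_ne a k (fun i hi => ha i (by omega))
    have e : a * cfall (a - 1) k = cfall a k * (a - k) := by
      rw [← cfall_succ_left, cfall_succ]
    have hB : cfall (a - 1) k = cfall a k * (a - k) / a := by
      field_simp
      linear_combination e
    have hc : crise (b - a) (k+1) = crise (b - a) k * (b - a + k) := by
      simp [crise, Finset.prod_range_succ]
    have hd : b - 1 - (a - 1) = b - a := by ring
    rw [hd, hB, hc, cfall_succ]
    field_simp
    ring

theorem stmt_4 (n r s : ℕ) (hr : r ≤ n) (hs : s ≤ min r (n - r)) (k : ℕ) (hk : k ≤ s) :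
    hahn n r s s (k : ℂ) =
      (-1 : ℂ) ^ k * crise ((r : ℂ) - s + 1) k / cfall ((n : ℂ) - r) k := by
  have hs2 : s ≤ n - r := le_trans hs (min_le_right _ _)
  have h := vand k (s + 1) ((n : ℂ) - r) ((n : ℂ) - s + 1) (by omega) (by
    intro i hi h
    rw [← Nat.cast_sub hr] at h
    have : n - r = i := by exact_mod_cast h
    omega)
  rw [show (n : ℂ) - s + 1 - (n - r) = r - s + 1 by ring] at h
  rw [← h, hahn]
  apply Finset.sum_congr rfl
  intro j hj
  have hj' : j < s + 1 := Finset.mem_range.1 hj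
  have hne : cfall (s : ℂ) j ≠ 0 := cfall_ne _ _ (by
    intro i hi h
    have : s = i := by exact_mod_cast h
    omega)
  rw [cbinom_nat, mul_right_comm _ (cfall (s : ℂ) j), mul_div_mul_right _ _ hne, mul_div_assoc]
end
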